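/- The polynomial q(x) = x¹⁰ − x⁹ − x⁸ − x⁷ + 6x⁶ + x⁵ − 3x⁴ − 4x³ + 2x² + 2x − 1 is irreducible over ℚ. Let L = ℚ[x]/(q(x)), let t be the image of x in L, and let 𝓞_L be the ring of integers of L. Then the principal ideal (t + 1) of 𝓞_L is a prime ideal of absolute norm 7, and the ideal (7) = 7𝓞_L factors as a product 𝒫₁𝒫₂𝒫₃𝒫₄𝒫₅ of five prime ideals of absolute norms 7, 7, 7², 7³ and 7³ respectively, with 𝒫₁ = (t + 1). -/

import Mathlib

open Polynomial

/-- The polynomial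
`q(x) = x¹⁰ − x⁹ − x⁸ − x⁷ + 6x⁶ + x⁵ − 3x⁴ − 4x³ + 2x² + 2x − 1` over `ℚ`. -/
noncomputable def qL : ℚ[X] :=
  X ^ 10 - X ^ 9 - X ^ 8 - X ^ 7 + 6 * X ^ 6 + X ^ 5 - 3 * X ^ 4 - 4 * X ^ 3 +
    2 * X ^ 2 + 2 * X - 1


open NumberField

/-- The integral model of `qL`. -/
noncomputable def qZ : ℤ[X] :=
  X ^ 10 - X ^ 9 - X ^ 8 - X ^ 7 + 6 * X ^ 6 + X ^ 5 - 3 * X ^ 4 - 4 * X ^ 3 + 2 * X ^ 2 + 2 * X - 1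

lemma qZ_monic : qZ.Monic := by
  unfold qZ; monicity!

lemma qZ_natDegree : qZ.natDegree = 10 := by
  unfold qZ; compute_degree!

lemma qZ_map : qZ.map (algebraMap ℤ ℚ) = qL := by
  simp [qZ, qL]

/-- `qZ` modulo 2 -/
noncomputable def q2 : (ZMod 2)[X] :=
  X ^ 10 - X ^ 9 - X ^ 8 - X ^ 7 + 6 * X ^ 6 + X ^ 5 - 3 * X ^ 4 - 4 * X ^ 3 + 2 * X ^ 2 + 2 * X - 1

lemma qZ_map2 : qZ.map (algebraMap ℤ (ZMod 2)) = q2 := by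
  simp [qZ, q2]

lemma two_poly : (2 : (ZMod 2)[X]) = 0 := by
  have : (2 : ZMod 2) = 0 := by decide
  rw [← C_ofNat, this, C_0]

lemma cop8 : IsCoprime q2 (X ^ 8 - X) := by
  refine ⟨1 + 1 * X ^ 2 + 1 * X ^ 4 + 1 * X ^ 6 + 1 * X ^ 7, 1 * X ^ 1 + 1 * X ^ 4 + 1 * X ^ 6 + 1 * X ^ 9, ?_⟩
  unfold q2
  linear_combination (-(1 + (-1) * X ^ 1 + 1 * X ^ 3 + 1 * X ^ 4 + 1 * X ^ 5 + (-2) * X ^ 6 + 2 * X ^ 7 + (-3) * X ^ 8 + 1 * X ^ 9 + 1 * X ^ 10 + 2 * X ^ 11 + (-4) * X ^ 12 + (-2) * X ^ 13 + 1 * X ^ 15 + (-1) * X ^ 17)) * two_poly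

lemma cop16 : IsCoprime q2 (X ^ 16 - X) := by
  refine ⟨1 + 1 * X ^ 4 + 1 * X ^ 6 + 1 * X ^ 8 + 1 * X ^ 13, 1 * X ^ 4 + 1 * X ^ 5 + 1 * X ^ 6 + 1 * X ^ 7, ?_⟩
  unfold q2
  linear_combination (-(1 + (-1) * X ^ 1 + (-1) * X ^ 2 + 2 * X ^ 3 + 2 * X ^ 4 + (-1) * X ^ 5 + (-3) * X ^ 6 + 2 * X ^ 7 + 2 * X ^ 8 + 1 * X ^ 9 + (-3) * X ^ 10 + 2 * X ^ 11 + (-1) * X ^ 12 + 1 * X ^ 13 + (-4) * X ^ 14 + 2 * X ^ 16 + 2 * X ^ 17 + (-1) * X ^ 18 + (-3) * X ^ 19 + (-1) * X ^ 23)) * two_poly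

lemma cop32 : IsCoprime q2 (X ^ 32 - X) := by
  refine ⟨1 + 1 * X ^ 1 + 1 * X ^ 3 + 1 * X ^ 5 + 1 * X ^ 6 + 1 * X ^ 7 + 1 * X ^ 8 + 1 * X ^ 9 + 1 * X ^ 13 + 1 * X ^ 18 + 1 * X ^ 19 + 1 * X ^ 20 + 1 * X ^ 21 + 1 * X ^ 23 + 1 * X ^ 25 + 1 * X ^ 26 + 1 * X ^ 28 + 1 * X ^ 30 + 1 * X ^ 31, 1 + 1 * X ^ 2 + 1 * X ^ 3 + 1 * X ^ 4 + 1 * X ^ 6 + 1 * X ^ 9, ?_⟩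
  unfold q2
  linear_combination (-(1 + (-2) * X ^ 2 + 2 * X ^ 3 + 3 * X ^ 4 + 1 * X ^ 5 + (-2) * X ^ 6 + (-2) * X ^ 7 + 1 * X ^ 8 + 2 * X ^ 10 + (-1) * X ^ 11 + 1 * X ^ 12 + (-1) * X ^ 13 + (-3) * X ^ 14 + (-3) * X ^ 15 + 3 * X ^ 16 + 2 * X ^ 17 + (-4) * X ^ 19 + (-1) * X ^ 20 + 1 * X ^ 21 + 2 * X ^ 22 + 2 * X ^ 23 + (-1) * X ^ 24 + (-2) * X ^ 25 + (-1) * X ^ 26 + (-2) * X ^ 27 + 2 * X ^ 28 + 1 * X ^ 30 + (-2) * X ^ 31 + (-3) * X ^ 32 + 1 * X ^ 33 + 1 * X ^ 34 + 1 * X ^ 35 + (-4) * X ^ 36 + (-2) * X ^ 37 + 1 * X ^ 39 + (-1) * X ^ 41)) * two_poly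

lemma q2_irreducible : Irreducible q2 := by
  have hm : q2.Monic := by rw [← qZ_map2]; exact qZ_monic.map _
  have hd : q2.natDegree = 10 := by
    rw [← qZ_map2, qZ_monic.natDegree_map, qZ_natDegree]
  have h1 : q2 ≠ 1 := by
    intro h; rw [h] at hd; simp at hd
  rw [hm.irreducible_iff_lt_natDegree_lt h1]
  intro g hg hgd hdvd
  rw [hd, Finset.mem_Ioc] at hgd
  have hgu : ¬ IsUnit g := by
    intro hu
    have := natDegree_eq_zero_of_isUnit hu
    omega
  obtain ⟨f, hf, hfg⟩ := WfDvdMonoid.exists_irreducible_factor hgu hg.ne_zero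
  have hle : f.natDegree ≤ 5 := (natDegree_le_of_dvd hfg hg.ne_zero).trans (by omega)
  have hpos : 0 < f.natDegree := hf.natDegree_pos
  have key : ∀ n : ℕ, IsCoprime q2 (X ^ 2 ^ n - X) → ¬ f.natDegree ∣ n := by
    intro n hc hn
    rw [hf.natDegree_dvd_iff_dvd_X_pow_card_pow_sub_X, Nat.card_zmod] at hn
    exact hf.not_isUnit (hc.isUnit_of_dvd' (hfg.trans hdvd) hn)
  have k3 := key 3 (by simpa using cop8)
  have k4 := key 4 (by simpa using cop16)
  have k5 := key 5 (by simpa using cop32)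
  generalize f.natDegree = m at *
  interval_cases m <;> omega

lemma qZ_irreducible : Irreducible qZ := by
  apply qZ_monic.irreducible_of_irreducible_map (algebraMap ℤ (ZMod 2))
  rw [qZ_map2]; exact q2_irreducible

lemma qL_irreducible : Irreducible qL := by
  rw [← qZ_map]
  exact (qZ_monic.irreducible_iff_irreducible_map_fraction_map).1 qZ_irreducible

section field
variable {L : Type} [Field L] [NumberField L] {t : 𝓞 L}

lemma minpoly_t (ht : aeval (algebraMap (𝓞 L) L t) qL = 0) : minpoly ℤ t = qZ := by
  have h := minpoly.eq_of_irreducible_of_monic qL_irreducible ht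
    (by rw [← qZ_map]; exact qZ_monic.map _)
  rw [minpoly.isIntegrallyClosed_eq_field_fractions ℚ L t.isIntegral, ← qZ_map] at h
  exact (map_injective _ (algebraMap ℤ ℚ).injective_int h).symm

lemma qZ_t (ht : aeval (algebraMap (𝓞 L) L t) qL = 0) :
    t ^ 10 - t ^ 9 - t ^ 8 - t ^ 7 + 6 * t ^ 6 + t ^ 5 - 3 * t ^ 4 - 4 * t ^ 3 + 2 * t ^ 2 + 2 * t - 1 = 0 := by
  have h := minpoly.aeval ℤ t
  rw [minpoly_t ht] at h
  simpa [qZ, aeval_def, eval₂_ofNat] using h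

lemma deriv_mem (ht : aeval (algebraMap (𝓞 L) L t) qL = 0)
    (htop : Algebra.adjoin ℚ {algebraMap (𝓞 L) L t} = ⊤) :
    10 * t ^ 9 - 9 * t ^ 8 - 8 * t ^ 7 - 7 * t ^ 6 + 36 * t ^ 5 + 5 * t ^ 4 - 12 * t ^ 3
      - 12 * t ^ 2 + 4 * t + 2 ∈ conductor ℤ t := by
  have h := conductor_mul_differentIdeal ℤ ℚ L t htop
  have h2 : aeval t (derivative (minpoly ℤ t)) ∈ conductor ℤ t := by
    have hle : conductor ℤ t * differentIdeal ℤ (𝓞 L) ≤ conductor ℤ t := Ideal.mul_le_left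
    rw [h] at hle
    apply hle
    exact Ideal.mem_span_singleton_self _
  rw [minpoly_t ht] at h2
  convert h2 using 1
  simp [qZ, aeval_def, eval₂_ofNat]
  ring

lemma not_dvd_exp (ht : aeval (algebraMap (𝓞 L) L t) qL = 0)
    (htop : Algebra.adjoin ℚ {algebraMap (𝓞 L) L t} = ⊤) :
    ¬ 7 ∣ RingOfIntegers.exponent t := by
  have hq := qZ_t ht
  have hd := deriv_mem ht htop
  set c := 10 * t ^ 9 - 9 * t ^ 8 - 8 * t ^ 7 - 7 * t ^ 6 + 36 * t ^ 5 + 5 * t ^ 4 - 12 * t ^ 3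
      - 12 * t ^ 2 + 4 * t + 2 with hc
  obtain ⟨v, w, hvw⟩ : ∃ v w : 𝓞 L, v * c + w * 7 = 1 := by
    refine ⟨3 + 4 * t ^ 1 + 5 * t ^ 3 + 6 * t ^ 4 + 2 * t ^ 5 + 4 * t ^ 6 + 6 * t ^ 9, (-4) * t ^ 1 + 1 * t ^ 2 + 13 * t ^ 3 + 3 * t ^ 4 + (-15) * t ^ 5 + (-5) * t ^ 6 + 17 * t ^ 7 + (-9) * t ^ 8 + (-22) * t ^ 9 + (-14) * t ^ 10 + 6 * t ^ 11 + 17 * t ^ 12 + (-6) * t ^ 13 + (-31) * t ^ 14 + 1 * t ^ 15 + 7 * t ^ 16 + 8 * t ^ 17 + (-9) * t ^ 18, ?_⟩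
    rw [hc]
    linear_combination (-(5 + 2 * t ^ 1 + 1 * t ^ 2 + 3 * t ^ 3 + 5 * t ^ 4 + 2 * t ^ 5 + 3 * t ^ 6 + 1 * t ^ 7 + 3 * t ^ 8)) * hq
  have hc0 : c ≠ 0 := by
    intro h0
    have h7 : IsUnit (7 : 𝓞 L) := IsUnit.of_mul_eq_one w (by rw [h0] at hvw; linear_combination hvw)
    have h8 : (7 : 𝓞 L) = algebraMap ℤ (𝓞 L) 7 := by simp
    have h9 := h7.map (Algebra.norm ℤ)
    rw [h8, Algebra.norm_algebraMap, isUnit_pow_iff Module.finrank_pos.ne', Int.isUnit_iff] at h9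
    omega
  have hne : conductor ℤ t ≠ ⊥ := fun h => hc0 (by rw [h] at hd; simpa using hd)
  have he0 : RingOfIntegers.exponent t ≠ 0 := by
    unfold RingOfIntegers.exponent
    rw [Ne, Ideal.absNorm_eq_zero_iff]
    exact Ideal.IsIntegral.comap_ne_bot _ hne
  rintro ⟨m, hm⟩
  have hS := RingOfIntegers.exponent_eq_sInf (θ := t)
  have hmem : ((RingOfIntegers.exponent t : ℕ) : 𝓞 L) ∈ conductor ℤ t := by
    have : RingOfIntegers.exponent t ∈ {d : ℕ | 0 < d ∧ (d : 𝓞 L) ∈ conductor ℤ t} := by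
      rw [hS]
      apply Nat.sInf_mem
      by_contra hempty
      rw [Set.not_nonempty_iff_eq_empty] at hempty
      rw [hempty] at hS
      exact he0 (by simpa using hS)
    exact this.2
  have hm' : (m : 𝓞 L) ∈ conductor ℤ t := by
    have : (m : 𝓞 L) = (m * v) * c + w * (RingOfIntegers.exponent t : ℕ) := by
      rw [hm]; push_cast; linear_combination (-(m : 𝓞 L)) * hvw
    rw [this]
    exact Ideal.add_mem _ (Ideal.mul_mem_left _ _ hd) (Ideal.mul_mem_left _ _ hmem)
  have hm0 : 0 < m := by
    rcases Nat.eq_zero_or_pos m with h | h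
    · subst h; simp at hm; exact absurd hm he0
    · exact h
  have : RingOfIntegers.exponent t ≤ m := by
    rw [hS]; exact Nat.sInf_le ⟨hm0, hm'⟩
  omega

instance fact7 : Fact (Nat.Prime 7) := ⟨by norm_num⟩

lemma prime_of_factor (ht : aeval (algebraMap (𝓞 L) L t) qL = 0)
    (htop : Algebra.adjoin ℚ {algebraMap (𝓞 L) L t} = ⊤) (g : ℤ[X]) (n : ℕ)
    (hg : g.Monic) (hn : g.natDegree = n)
    (hirr : Irreducible (g.map (Int.castRingHom (ZMod 7))))
    (hdvd : g.map (Int.castRingHom (ZMod 7)) ∣ qZ.map (Int.castRingHom (ZMod 7))) :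
    (Ideal.span {7, aeval t g}).IsPrime ∧ Ideal.absNorm (Ideal.span {7, aeval t g}) = 7 ^ n := by
  have hQ : g.map (Int.castRingHom (ZMod 7)) ∈ RingOfIntegers.monicFactorsMod t 7 := by
    rw [Multiset.mem_toFinset, Polynomial.mem_normalizedFactors_iff, minpoly_t ht]
    · exact ⟨hirr, hg.map _, hdvd⟩
    · exact map_monic_ne_zero (minpoly.monic t.isIntegral)
  have e := RingOfIntegers.ZModXQuotSpanEquivQuotSpanPair (not_dvd_exp ht htop) hQ
  simp only [Nat.cast_ofNat] at e
  constructor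
  · rw [← Ideal.Quotient.isDomain_iff_prime]
    have : (Ideal.span {g.map (Int.castRingHom (ZMod 7))}).IsPrime :=
      (Ideal.span_singleton_prime hirr.ne_zero).2 hirr.prime
    exact MulEquiv.isDomain _ e.symm.toMulEquiv
  · rw [Ideal.absNorm_apply, Submodule.cardQuot_apply, ← Nat.card_congr e.toEquiv]
    have hm := hg.map (Int.castRingHom (ZMod 7))
    have := hm.finite_quotient
    have := Module.natCard_eq_pow_finrank (K := ZMod 7)
      (V := (ZMod 7)[X] ⧸ Ideal.span {g.map (Int.castRingHom (ZMod 7))})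
    rw [this, finrank_quotient_span_eq_natDegree, hg.natDegree_map, hn, Nat.card_zmod]

lemma map_dvd_of (g h r : ℤ[X]) (e : qZ = g * h + 7 * r) :
    g.map (Int.castRingHom (ZMod 7)) ∣ qZ.map (Int.castRingHom (ZMod 7)) := by
  have h7 : (7 : (ZMod 7)[X]) = 0 := by
    have : (7 : ZMod 7) = 0 := by decide
    rw [← C_ofNat, this, C_0]
  rw [e]
  simp [h7]

lemma fac1 (ht : aeval (algebraMap (𝓞 L) L t) qL = 0)
    (htop : Algebra.adjoin ℚ {algebraMap (𝓞 L) L t} = ⊤) :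
    (Ideal.span {7, t + 1}).IsPrime ∧ Ideal.absNorm (Ideal.span {7, t + 1}) = 7 ^ 1 := by
  have hg : (X + 1 : ℤ[X]).Monic := by monicity!
  have hd : (X + 1 : ℤ[X]).natDegree = 1 := by compute_degree!
  have := prime_of_factor ht htop (X + 1) 1 hg hd ?_ ?_
  · simpa [aeval_def, eval₂_ofNat] using this
  · apply irreducible_of_degree_eq_one
    rw [hg.degree_map, degree_eq_natDegree hg.ne_zero, hd]; rfl
  · refine map_dvd_of _ ((X + 3) * (X ^ 2 + 1) * (X ^ 3 + 2 * X ^ 2 + X + 6) * (X ^ 3 + 5)) ((-13) + (-19) * X ^ 1 + (-24) * X ^ 2 + (-31) * X ^ 3 + (-20) * X ^ 4 + (-14) * X ^ 5 + (-9) * X ^ 6 + (-4) * X ^ 7 + (-2) * X ^ 8 + (-1) * X ^ 9) ?_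
    unfold qZ
    ring

lemma fac2 (ht : aeval (algebraMap (𝓞 L) L t) qL = 0)
    (htop : Algebra.adjoin ℚ {algebraMap (𝓞 L) L t} = ⊤) :
    (Ideal.span {7, t + 3}).IsPrime ∧ Ideal.absNorm (Ideal.span {7, t + 3}) = 7 ^ 1 := by
  have hg : (X + 3 : ℤ[X]).Monic := by monicity!
  have hd : (X + 3 : ℤ[X]).natDegree = 1 := by compute_degree!
  have := prime_of_factor ht htop (X + 3) 1 hg hd ?_ ?_
  · simpa [aeval_def, eval₂_ofNat] using this
  · apply irreducible_of_degree_eq_one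
    rw [hg.degree_map, degree_eq_natDegree hg.ne_zero, hd]; rfl
  · refine map_dvd_of _ ((X + 1) * (X ^ 2 + 1) * (X ^ 3 + 2 * X ^ 2 + X + 6) * (X ^ 3 + 5)) ((-13) + (-19) * X ^ 1 + (-24) * X ^ 2 + (-31) * X ^ 3 + (-20) * X ^ 4 + (-14) * X ^ 5 + (-9) * X ^ 6 + (-4) * X ^ 7 + (-2) * X ^ 8 + (-1) * X ^ 9) ?_
    unfold qZ
    ring

lemma fac3 (ht : aeval (algebraMap (𝓞 L) L t) qL = 0)
    (htop : Algebra.adjoin ℚ {algebraMap (𝓞 L) L t} = ⊤) :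
    (Ideal.span {7, t ^ 2 + 1}).IsPrime ∧ Ideal.absNorm (Ideal.span {7, t ^ 2 + 1}) = 7 ^ 2 := by
  have hg : (X ^ 2 + 1 : ℤ[X]).Monic := by monicity!
  have hd : (X ^ 2 + 1 : ℤ[X]).natDegree = 2 := by compute_degree!
  have := prime_of_factor ht htop (X ^ 2 + 1) 2 hg hd ?_ ?_
  · simpa [aeval_def, eval₂_ofNat] using this
  · apply irreducible_of_degree_le_three_of_not_isRoot
    · rw [hg.natDegree_map, hd]; decide
    · simp only [Polynomial.map_add, Polynomial.map_mul, Polynomial.map_pow, map_X,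
        Polynomial.map_one, Polynomial.map_ofNat, IsRoot.def, eval_add, eval_mul, eval_pow,
        eval_X, eval_one, eval_ofNat]
      decide
  · refine map_dvd_of _ ((X + 1) * (X + 3) * (X ^ 3 + 2 * X ^ 2 + X + 6) * (X ^ 3 + 5)) ((-13) + (-19) * X ^ 1 + (-24) * X ^ 2 + (-31) * X ^ 3 + (-20) * X ^ 4 + (-14) * X ^ 5 + (-9) * X ^ 6 + (-4) * X ^ 7 + (-2) * X ^ 8 + (-1) * X ^ 9) ?_
    unfold qZ
    ring

lemma fac4 (ht : aeval (algebraMap (𝓞 L) L t) qL = 0)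
    (htop : Algebra.adjoin ℚ {algebraMap (𝓞 L) L t} = ⊤) :
    (Ideal.span {7, t ^ 3 + 2 * t ^ 2 + t + 6}).IsPrime ∧ Ideal.absNorm (Ideal.span {7, t ^ 3 + 2 * t ^ 2 + t + 6}) = 7 ^ 3 := by
  have hg : (X ^ 3 + 2 * X ^ 2 + X + 6 : ℤ[X]).Monic := by monicity!
  have hd : (X ^ 3 + 2 * X ^ 2 + X + 6 : ℤ[X]).natDegree = 3 := by compute_degree!
  have := prime_of_factor ht htop (X ^ 3 + 2 * X ^ 2 + X + 6) 3 hg hd ?_ ?_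
  · simpa [aeval_def, eval₂_ofNat] using this
  · apply irreducible_of_degree_le_three_of_not_isRoot
    · rw [hg.natDegree_map, hd]; decide
    · simp only [Polynomial.map_add, Polynomial.map_mul, Polynomial.map_pow, map_X,
        Polynomial.map_one, Polynomial.map_ofNat, IsRoot.def, eval_add, eval_mul, eval_pow,
        eval_X, eval_one, eval_ofNat]
      decide
  · refine map_dvd_of _ ((X + 1) * (X + 3) * (X ^ 2 + 1) * (X ^ 3 + 5)) ((-13) + (-19) * X ^ 1 + (-24) * X ^ 2 + (-31) * X ^ 3 + (-20) * X ^ 4 + (-14) * X ^ 5 + (-9) * X ^ 6 + (-4) * X ^ 7 + (-2) * X ^ 8 + (-1) * X ^ 9) ?_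
    unfold qZ
    ring

lemma fac5 (ht : aeval (algebraMap (𝓞 L) L t) qL = 0)
    (htop : Algebra.adjoin ℚ {algebraMap (𝓞 L) L t} = ⊤) :
    (Ideal.span {7, t ^ 3 + 5}).IsPrime ∧ Ideal.absNorm (Ideal.span {7, t ^ 3 + 5}) = 7 ^ 3 := by
  have hg : (X ^ 3 + 5 : ℤ[X]).Monic := by monicity!
  have hd : (X ^ 3 + 5 : ℤ[X]).natDegree = 3 := by compute_degree!
  have := prime_of_factor ht htop (X ^ 3 + 5) 3 hg hd ?_ ?_
  · simpa [aeval_def, eval₂_ofNat] using this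
  · apply irreducible_of_degree_le_three_of_not_isRoot
    · rw [hg.natDegree_map, hd]; decide
    · simp only [Polynomial.map_add, Polynomial.map_mul, Polynomial.map_pow, map_X,
        Polynomial.map_one, Polynomial.map_ofNat, IsRoot.def, eval_add, eval_mul, eval_pow,
        eval_X, eval_one, eval_ofNat]
      decide
  · refine map_dvd_of _ ((X + 1) * (X + 3) * (X ^ 2 + 1) * (X ^ 3 + 2 * X ^ 2 + X + 6)) ((-13) + (-19) * X ^ 1 + (-24) * X ^ 2 + (-31) * X ^ 3 + (-20) * X ^ 4 + (-14) * X ^ 5 + (-9) * X ^ 6 + (-4) * X ^ 7 + (-2) * X ^ 8 + (-1) * X ^ 9) ?_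
    unfold qZ
    ring

lemma cop_pair {a b u v w : 𝓞 L} (h : u * a + v * b + 7 * w = 1) :
    IsCoprime (Ideal.span {7, a}) (Ideal.span {7, b}) := by
  rw [Ideal.isCoprime_iff_exists]
  refine ⟨7 * w + u * a, ?_, v * b, ?_, by linear_combination h⟩
  · exact Ideal.mem_span_pair.2 ⟨w, u, by ring⟩
  · exact Ideal.mem_span_pair.2 ⟨0, v, by ring⟩

lemma cp12 : IsCoprime (Ideal.span {7, t + 1}) (Ideal.span {7, t + 3}) :=
  cop_pair (u := 3) (v := 4) (w := (-2) + (-1) * t ^ 1) (by ring)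

lemma cp13 : IsCoprime (Ideal.span {7, t + 1}) (Ideal.span {7, t ^ 2 + 1}) :=
  cop_pair (u := 4 + 3 * t ^ 1) (v := 4) (w := (-1) + (-1) * t ^ 1 + (-1) * t ^ 2) (by ring)

lemma cp14 : IsCoprime (Ideal.span {7, t + 1}) (Ideal.span {7, t ^ 3 + 2 * t ^ 2 + t + 6}) :=
  cop_pair (u := 1 * t ^ 1 + 1 * t ^ 2) (v := 6) (w := (-5) + (-1) * t ^ 1 + (-2) * t ^ 2 + (-1) * t ^ 3) (by ring)

lemma cp15 : IsCoprime (Ideal.span {7, t + 1}) (Ideal.span {7, t ^ 3 + 5}) :=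
  cop_pair (u := 5 + 2 * t ^ 1 + 5 * t ^ 2) (v := 2) (w := (-2) + (-1) * t ^ 1 + (-1) * t ^ 2 + (-1) * t ^ 3) (by ring)

lemma cp23 : IsCoprime (Ideal.span {7, t + 3}) (Ideal.span {7, t ^ 2 + 1}) :=
  cop_pair (u := 1 + 2 * t ^ 1) (v := 5) (w := (-1) + (-1) * t ^ 1 + (-1) * t ^ 2) (by ring)

lemma cp24 : IsCoprime (Ideal.span {7, t + 3}) (Ideal.span {7, t ^ 3 + 2 * t ^ 2 + t + 6}) :=
  cop_pair (u := 3 + 1 * t ^ 1 + 6 * t ^ 2) (v := 1) (w := (-2) + (-1) * t ^ 1 + (-3) * t ^ 2 + (-1) * t ^ 3) (by ring)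

lemma cp25 : IsCoprime (Ideal.span {7, t + 3}) (Ideal.span {7, t ^ 3 + 5}) :=
  cop_pair (u := 2 + 4 * t ^ 1 + 1 * t ^ 2) (v := 6) (w := (-5) + (-2) * t ^ 1 + (-1) * t ^ 2 + (-1) * t ^ 3) (by ring)

lemma cp34 : IsCoprime (Ideal.span {7, t ^ 2 + 1}) (Ideal.span {7, t ^ 3 + 2 * t ^ 2 + t + 6}) :=
  cop_pair (u := 3 + 5 * t ^ 1) (v := 2) (w := (-2) + (-1) * t ^ 1 + (-1) * t ^ 2 + (-1) * t ^ 3) (by ring)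

lemma cp35 : IsCoprime (Ideal.span {7, t ^ 2 + 1}) (Ideal.span {7, t ^ 3 + 5}) :=
  cop_pair (u := 3 + 6 * t ^ 1 + 4 * t ^ 2) (v := 1 + 3 * t ^ 1) (w := (-1) + (-3) * t ^ 1 + (-1) * t ^ 2 + (-1) * t ^ 3 + (-1) * t ^ 4) (by ring)

lemma cp45 : IsCoprime (Ideal.span {7, t ^ 3 + 2 * t ^ 2 + t + 6}) (Ideal.span {7, t ^ 3 + 5}) :=
  cop_pair (u := 2 + 3 * t ^ 2) (v := 2 + 1 * t ^ 1 + 4 * t ^ 2) (w := (-3) + (-1) * t ^ 1 + (-6) * t ^ 2 + (-1) * t ^ 3 + (-1) * t ^ 4 + (-1) * t ^ 5) (by ring)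

lemma mul_span_mem {I : Ideal (𝓞 L)} {a b : 𝓞 L} (h : I ≤ Ideal.span {7, a}) :
    I * Ideal.span {7, b} ≤ Ideal.span {7, a * b} := by
  refine (Ideal.mul_mono_left h).trans ?_
  rw [Ideal.mul_le]
  intro x hx y hy
  obtain ⟨x1, x2, rfl⟩ := Ideal.mem_span_pair.1 hx
  obtain ⟨y1, y2, rfl⟩ := Ideal.mem_span_pair.1 hy
  exact Ideal.mem_span_pair.2 ⟨x1 * (y1 * 7 + y2 * b) + x2 * a * y1, x2 * y2, by ring⟩

lemma seven_prod (ht : aeval (algebraMap (𝓞 L) L t) qL = 0) :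
    Ideal.span {(7 : 𝓞 L)} = Ideal.span {7, t + 1} * Ideal.span {7, t + 3} * Ideal.span {7, t ^ 2 + 1} *
      Ideal.span {7, t ^ 3 + 2 * t ^ 2 + t + 6} * Ideal.span {7, t ^ 3 + 5} := by
  apply le_antisymm
  · rw [Ideal.mul_eq_inf_of_isCoprime (((cp15.mul_left cp25).mul_left cp35).mul_left cp45),
      Ideal.mul_eq_inf_of_isCoprime ((cp14.mul_left cp24).mul_left cp34),
      Ideal.mul_eq_inf_of_isCoprime (cp13.mul_left cp23),
      Ideal.mul_eq_inf_of_isCoprime cp12]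
    rw [Ideal.span_singleton_le_iff_mem]
    have h7 : ∀ a : 𝓞 L, (7 : 𝓞 L) ∈ Ideal.span {7, a} := fun a => Ideal.subset_span (by simp)
    exact ⟨⟨⟨⟨h7 _, h7 _⟩, h7 _⟩, h7 _⟩, h7 _⟩
  · refine (mul_span_mem (mul_span_mem (mul_span_mem (mul_span_mem le_rfl)))).trans ?_
    rw [Ideal.span_le]
    have hq := qZ_t ht
    rintro x (rfl | rfl)
    · exact Ideal.mem_span_singleton_self _
    · refine Ideal.mem_span_singleton.2 ⟨-((-13) + (-19) * t ^ 1 + (-24) * t ^ 2 + (-31) * t ^ 3 + (-20) * t ^ 4 + (-14) * t ^ 5 + (-9) * t ^ 6 + (-4) * t ^ 7 + (-2) * t ^ 8 + (-1) * t ^ 9), ?_⟩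
      linear_combination hq

lemma span_t1 (ht : aeval (algebraMap (𝓞 L) L t) qL = 0) :
    Ideal.span {7, t + 1} = Ideal.span {t + 1} := by
  rw [Ideal.span_pair_comm, Ideal.span_pair_eq_span_left_iff_dvd]
  have hq := qZ_t ht
  refine ⟨-((-8) * t ^ 0 + (10) * t ^ 1 + (-8) * t ^ 2 + (4) * t ^ 3 + (-7) * t ^ 4 + (8) * t ^ 5 + (-2) * t ^ 6 + (1) * t ^ 7 + (-2) * t ^ 8 + (1) * t ^ 9), ?_⟩
  linear_combination hq

end field

/-- `q(x)` is irreducible over `ℚ`; and if `L = ℚ[x]/(q(x))` (i.e. any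
number field generated over `ℚ` by a root `t` of `q`, with `t` in the ring of
integers `𝓞_L`), then `(t + 1)` is a prime ideal of `𝓞_L` of absolute norm `7`, and
`(7) = 𝒫₁𝒫₂𝒫₃𝒫₄𝒫₅` with the `𝒫ᵢ` prime of absolute norms `7, 7, 7², 7³, 7³`
respectively, and `𝒫₁ = (t + 1)`. -/
theorem stmt_14 :
    Irreducible qL ∧
    ∀ (L : Type) [Field L] [NumberField L] (t : NumberField.RingOfIntegers L),
      aeval (algebraMap (NumberField.RingOfIntegers L) L t) qL = 0 →
      Algebra.adjoin ℚ {algebraMap (NumberField.RingOfIntegers L) L t} = ⊤ →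
      ((Ideal.span {t + 1}).IsPrime ∧
        Ideal.absNorm (Ideal.span {t + 1}) = 7 ∧
        ∃ P₂ P₃ P₄ P₅ : Ideal (NumberField.RingOfIntegers L),
          P₂.IsPrime ∧ P₃.IsPrime ∧ P₄.IsPrime ∧ P₅.IsPrime ∧
          Ideal.absNorm P₂ = 7 ∧ Ideal.absNorm P₃ = 7 ^ 2 ∧
          Ideal.absNorm P₄ = 7 ^ 3 ∧ Ideal.absNorm P₅ = 7 ^ 3 ∧
          Ideal.span {(7 : NumberField.RingOfIntegers L)} =
            Ideal.span {t + 1} * P₂ * P₃ * P₄ * P₅) := by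
  refine ⟨qL_irreducible, fun L _ _ t ht htop => ?_⟩
  have h1 := fac1 ht htop
  have hs := seven_prod ht
  rw [span_t1 ht] at h1 hs
  exact ⟨h1.1, by simpa using h1.2, _, _, _, _, (fac2 ht htop).1, (fac3 ht htop).1,
    (fac4 ht htop).1, (fac5 ht htop).1, by simpa using (fac2 ht htop).2, (fac3 ht htop).2,
    (fac4 ht htop).2, (fac5 ht htop).2, hs⟩
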